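/- For all 1 ≤ l ≤ n: X_l·D_l = (q−q^{−1})^{−1}·(T^{−1})^+_{l,n−1}·(Y_n − Y_n^{−1})·T^-_{n−1,l} and D_l·X_l = (q−q^{−1})^{−1}·(T^{−1})^-_{l−1,1}·(qY_1 − q^{−1}Y_1^{−1})·T^+_{1,l−1}. Moreover, for all n ≥ j > i ≥ 1: D_jX_i − X_iD_j = (τ^{−1}−τ)(q−q^{−1})^{−1}·(T^{−1})^+_{i,n−1}·(T^{−1})^-_{j−2,1}·(qY_1 + Y_n^{−1})·T^-_{n−1,j}·T^+_{1,i−1}, and D_iX_j − X_jD_i = (τ^{−1}−τ)(q−q^{−1})^{−1}·(T^{−1})^-_{i−1,1}·(T^{−1})^+_{j,n−1}·(q^{−1}Y_1^{−1} + Y_n)·T^+_{1,j−2}·T^-_{n−1,i}. -/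

import Mathlib

noncomputable section

/-- The Laurent polynomial ring `R[X₁^{±1}, …, Xₙ^{±1}]` in `n` variables over `R`,
realised as the monoid algebra of the additive monoid `Fin n →₀ ℤ` of exponent vectors. -/
abbrev Laur (R : Type*) [CommRing R] (n : ℕ) : Type _ :=
  AddMonoidAlgebra R (Fin n →₀ ℤ)

variable {R : Type*} [CommRing R] {n : ℕ}

/-- The monomial `c · X^a`. -/
def mono (a : Fin n →₀ ℤ) (c : R) : Laur R n := AddMonoidAlgebra.single a c

/-- The generator `X_i`. -/
def Xel (i : Fin n) : Laur R n := mono (Finsupp.single i 1) 1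

/-- The element `X_i⁻¹`. -/
def XinvEl (i : Fin n) : Laur R n := mono (Finsupp.single i (-1)) 1

/-- Multiplication by a Laurent polynomial, as a linear endomorphism. -/
def mulOp (x : Laur R n) : Module.End R (Laur R n) := LinearMap.mulLeft R x

/-- The operator of multiplication by `X_i`, with `ℕ`-indexing (`0`-based; junk value `1`
out of range). -/
def XOp (i : ℕ) : Module.End R (Laur R n) :=
  if h : i < n then mulOp (Xel ⟨i, h⟩) else 1

/-- The operator of multiplication by `X_i⁻¹`, with `ℕ`-indexing. -/
def XinvOp (i : ℕ) : Module.End R (Laur R n) :=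
  if h : i < n then mulOp (XinvEl ⟨i, h⟩) else 1

/-- Ascending product `f s * f (s+1) * ⋯ * f (s+len-1)` (equal to `1` when `len = 0`). -/
def aF {M : Type*} [Monoid M] (f : ℕ → M) (s len : ℕ) : M :=
  ((List.range' s len).map f).prod

/-- Descending product `f (s+len-1) * ⋯ * f (s+1) * f s` (equal to `1` when `len = 0`). -/
def dF {M : Type*} [Monoid M] (f : ℕ → M) (s len : ℕ) : M :=
  (((List.range' s len).map f).reverse).prod

/-- Integer power `u^z`, where `v` is a designated (two-sided) inverse of `u`. -/
def zpowOp {M : Type*} [Monoid M] (u v : M) (z : ℤ) : M :=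
  if 0 ≤ z then u ^ z.toNat else v ^ (-z).toNat


/-! ### Products over intervals -/

/-- Ascending product of `f k` for `a ≤ k < b`. -/
def seg {G : Type*} [Monoid G] (f : ℕ → G) (a b : ℕ) : G := aF f a (b - a)

theorem seg_self {G : Type*} [Monoid G] (f : ℕ → G) (a : ℕ) : seg f a a = 1 := by
  simp [seg, aF]

theorem seg_succ {G : Type*} [Monoid G] (f : ℕ → G) {a b : ℕ} (h : a ≤ b) :
    seg f a (b + 1) = seg f a b * f b := by
  obtain ⟨d, rfl⟩ := Nat.exists_eq_add_of_le h
  have e1 : a + d + 1 - a = d + 1 := by omega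
  have e2 : a + d - a = d := by omega
  simp [seg, aF, e1, e2, List.range'_concat]

theorem seg_one {G : Type*} [Monoid G] (f : ℕ → G) (a : ℕ) : seg f a (a + 1) = f a := by
  rw [seg_succ f le_rfl, seg_self, one_mul]

theorem seg_mul {G : Type*} [Monoid G] (f : ℕ → G) {a b c : ℕ} (h : a ≤ b) (h' : b ≤ c) :
    seg f a b * seg f b c = seg f a c := by
  induction c, h' using Nat.le_induction with
  | base => rw [seg_self, mul_one]
  | succ c hc ih => rw [seg_succ f hc, seg_succ f (h.trans hc), ← ih, mul_assoc]

theorem semiconj_seg {G : Type*} [Monoid G] (z : G) (f g : ℕ → G) {a b : ℕ} (h : a ≤ b)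
    (H : ∀ k, a ≤ k → k < b → SemiconjBy z (f k) (g k)) :
    SemiconjBy z (seg f a b) (seg g a b) := by
  induction b, h using Nat.le_induction with
  | base => rw [seg_self, seg_self]; exact SemiconjBy.one_right z
  | succ b hb ih =>
    rw [seg_succ f hb, seg_succ g hb]
    exact (ih fun k h1 h2 => H k h1 (by omega)).mul_right (H b hb (by omega))

theorem commute_seg {G : Type*} [Monoid G] (z : G) (f : ℕ → G) {a b : ℕ} (h : a ≤ b)
    (H : ∀ k, a ≤ k → k < b → Commute z (f k)) : Commute z (seg f a b) :=
  semiconj_seg z f f h H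

theorem seg_shift {G : Type*} [Monoid G] (f : ℕ → G) {a b : ℕ} (h : a ≤ b) :
    seg (fun k => f (k + 1)) a b = seg f (a + 1) (b + 1) := by
  induction b, h using Nat.le_induction with
  | base => rw [seg_self, seg_self]
  | succ b hb ih => rw [seg_succ _ hb, seg_succ f (by omega : a + 1 ≤ b + 1), ih]

/-- Moving a generator through an ascending product via the braid relation. -/
theorem seg_braid {G : Type*} [Monoid G] (f g : ℕ → G) {a b k : ℕ} (ha : a ≤ k) (hb : k + 1 < b)
    (hbr : f k * f (k + 1) * g k = g (k + 1) * (f k * f (k + 1)))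
    (hlo : ∀ m, a ≤ m → m < k → Commute (g (k + 1)) (f m))
    (hhi : ∀ m, k + 2 ≤ m → m < b → Commute (g k) (f m)) :
    SemiconjBy (seg f a b) (g k) (g (k + 1)) := by
  have e : seg f a b = seg f a k * ((f k * f (k + 1)) * seg f (k + 2) b) := by
    rw [← seg_mul f ha (by omega : k ≤ b), ← seg_mul f (by omega : k ≤ k + 2) (by omega : k + 2 ≤ b),
      seg_succ f (by omega : k ≤ k + 1), seg_one]
  rw [e]
  have h1 : SemiconjBy (seg f a k) (g (k + 1)) (g (k + 1)) :=
    (commute_seg _ f ha hlo).symm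
  have h2 : SemiconjBy (seg f (k + 2) b) (g k) (g k) :=
    (commute_seg _ f (by omega) hhi).symm
  have h3 : SemiconjBy (f k * f (k + 1)) (g k) (g (k + 1)) := hbr
  exact h1.mul_left (h3.mul_left h2)

/-! ### The group-level data -/

/-- Group-level relations of the double affine Hecke algebra (`N = n - 1`). -/
structure GData (G : Type*) [Group G] (N : ℕ) (t x : ℕ → G) (p c : G) : Prop where
  tx : ∀ k, k < N → t k * x k * t k = x (k + 1)
  txc : ∀ k m, k < N → m ≤ N → m ≠ k → m ≠ k + 1 → Commute (t k) (x m)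
  braid : ∀ k, k + 1 < N → t k * t (k + 1) * t k = t (k + 1) * t k * t (k + 1)
  far : ∀ k m, k + 1 < m → m < N → Commute (t k) (t m)
  pt : ∀ k, k + 1 < N → p * t (k + 1) = t k * p
  px0 : p * x 0 = c * x N * p
  px : ∀ k, k < N → p * x (k + 1) = x k * p
  xx : ∀ k m, Commute (x k) (x m)
  cc : ∀ g, Commute c g

namespace GData

variable {G : Type*} [Group G] {N : ℕ} {t x : ℕ → G} {p c : G}

/-- ascending product of inverses -/
local notation "U" => seg t
local notation "V" => seg (fun k => (t k)⁻¹)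

theorem xU (H : GData G N t x p c) {a b : ℕ} (hab : a ≤ b) (hb : b ≤ N) :
    x a * U a b = V a b * x b := by
  induction b, hab using Nat.le_induction with
  | base => simp [seg_self]
  | succ b hab ih =>
    rw [seg_succ _ hab, seg_succ _ hab, ← mul_assoc, ih (by omega), ← H.tx b (by omega)]
    group

theorem txc' (H : GData G N t x p c) {a b m : ℕ} (hab : a ≤ b) (hb : b ≤ N) (hm : m ≤ N)
    (h : m < a ∨ b < m) : Commute (x m) (U a b) :=
  commute_seg _ _ hab fun k h1 h2 => (H.txc k m (by omega) hm (by omega) (by omega)).symm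

theorem txc'' (H : GData G N t x p c) {a b m : ℕ} (hab : a ≤ b) (hb : b ≤ N) (hm : m ≤ N)
    (h : m < a ∨ b < m) : Commute (x m) (V a b) :=
  commute_seg _ _ hab fun k h1 h2 =>
    (H.txc k m (by omega) hm (by omega) (by omega)).symm.inv_right

theorem far' (H : GData G N t x p c) {k m : ℕ} (hk : k < N) (hm : m < N)
    (h : k + 1 < m ∨ m + 1 < k) : Commute (t k) (t m) := by
  rcases h with h | h
  · exact H.far k m h hm
  · exact (H.far m k h hk).symm

theorem Ut (H : GData G N t x p c) {a b k : ℕ} (ha : a ≤ k) (hk : k + 1 < b) (hb : b ≤ N) :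
    SemiconjBy (U a b) (t k) (t (k + 1)) := by
  apply seg_braid t t ha hk
  · rw [H.braid k (by omega)]; group
  · intro m h1 h2; exact H.far' (by omega) (by omega) (by omega)
  · intro m h1 h2; exact H.far' (by omega) (by omega) (by omega)

theorem Vt (H : GData G N t x p c) {a b k : ℕ} (ha : a ≤ k) (hk : k + 1 < b) (hb : b ≤ N) :
    SemiconjBy (V a b) (t k) (t (k + 1)) := by
  apply seg_braid (fun k => (t k)⁻¹) t ha hk
  · have h := H.braid k (by omega)
    have h2 : t (k + 1) * t k * (t (k + 1))⁻¹ = (t k)⁻¹ * (t (k + 1)) * t k := by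
      rw [mul_inv_eq_iff_eq_mul]
      simp only [mul_assoc] at h ⊢
      rw [eq_inv_mul_iff_mul_eq, h]
    have h3 : (t k)⁻¹ * (t (k + 1))⁻¹ * t k = t (k + 1) * (t k)⁻¹ * (t (k + 1))⁻¹ := by
      have := congrArg (·⁻¹) h2
      simp only [mul_inv_rev, inv_inv, mul_assoc] at this ⊢
      exact this.symm
    simp only [h3, mul_assoc]
  · intro m h1 h2; exact (H.far' (by omega) (by omega) (by omega)).inv_right
  · intro m h1 h2; exact (H.far' (by omega) (by omega) (by omega)).inv_right

theorem VU (H : GData G N t x p c) {a b d e : ℕ} (ha : a ≤ d) (hde : d ≤ e) (he : e < b)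
    (hb : b ≤ N) : V a b * U d e = U (d + 1) (e + 1) * V a b := by
  have := semiconj_seg (V a b) t (fun k => t (k + 1)) hde
    fun k h1 h2 => H.Vt (by omega) (by omega) hb
  rw [seg_shift t hde] at this
  exact this

theorem UcV (H : GData G N t x p c) {a b d e : ℕ} (hab : a ≤ b) (hde : d ≤ e) (hb : b ≤ N)
    (he : e ≤ N) (h : b < d ∨ e < a) : Commute (U a b) (V d e) := by
  apply commute_seg _ _ hde
  intro k h1 h2
  apply Commute.inv_right
  apply Commute.symm
  apply commute_seg _ _ hab
  intro m h3 h4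
  exact H.far' (by omega) (by omega) (by omega)

theorem pU (H : GData G N t x p c) {a b : ℕ} (hab : a ≤ b) (hb : b < N) :
    p * U (a + 1) (b + 1) = U a b * p := by
  have := semiconj_seg p (fun k => t (k + 1)) t hab fun k h1 h2 => H.pt k (by omega)
  rw [seg_shift t hab] at this
  exact this

theorem pV (H : GData G N t x p c) {a b : ℕ} (hab : a ≤ b) (hb : b < N) :
    p * V (a + 1) (b + 1) = V a b * p := by
  have := semiconj_seg p (fun k => (t (k + 1))⁻¹) (fun k => (t k)⁻¹) hab
    fun k h1 h2 => (show SemiconjBy p _ _ from H.pt k (by omega)).inv_right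
  rw [seg_shift (fun k => (t k)⁻¹) hab] at this
  exact this

theorem yNt (H : GData G N t x p c) {k : ℕ} (hk : k + 1 < N) : Commute (p * V 0 N) (t k) :=
  SemiconjBy.mul_left (show SemiconjBy p _ _ from H.pt k hk) (H.Vt (Nat.zero_le _) hk le_rfl)

theorem y0t (H : GData G N t x p c) {k : ℕ} (hk : k + 1 < N) :
    Commute (U 0 N * p) (t (k + 1)) :=
  (H.Ut (Nat.zero_le _) hk le_rfl).mul_left (show SemiconjBy p _ _ from H.pt k hk)

/-- key conjugation -/
theorem conj (H : GData G N t x p c) :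
    (x N)⁻¹ * (p * V 0 N) * x N = (U 0 N)⁻¹ * (c * (U 0 N * p)) * U 0 N := by
  have h1 := H.xU (Nat.zero_le N) le_rfl
  calc (x N)⁻¹ * (p * V 0 N) * x N = (x N)⁻¹ * p * (V 0 N * x N) := by group
    _ = (x N)⁻¹ * (p * x 0) * U 0 N := by rw [← h1]; group
    _ = (x N)⁻¹ * (c * x N) * p * U 0 N := by rw [H.px0]; group
    _ = c * p * U 0 N := by rw [(H.cc (x N)).eq]; group
    _ = (U 0 N)⁻¹ * (U 0 N * c) * p * U 0 N := by group
    _ = _ := by rw [← (H.cc (U 0 N)).eq]; group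

theorem Vx (H : GData G N t x p c) {a b : ℕ} (hab : a ≤ b) (hb : b ≤ N) :
    (V a b)⁻¹ * x a = x b * (U a b)⁻¹ := by
  rw [inv_mul_eq_iff_eq_mul, ← mul_assoc, ← H.xU hab hb]; group

theorem g2 (H : GData G N t x p c) {l : ℕ} (hl : l ≤ N) :
    U l N * ((x N)⁻¹ * (p * V 0 N)) * (V l N)⁻¹ * x l
      = (U 0 l)⁻¹ * (c * (U 0 N * p)) * U 0 l := by
  rw [mul_assoc, H.Vx hl le_rfl]
  have := H.conj
  have h2 := seg_mul t (Nat.zero_le l) hl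
  calc _ = U l N * ((x N)⁻¹ * (p * V 0 N) * x N) * (U l N)⁻¹ := by group
    _ = _ := by rw [this, ← h2]; group

theorem g2' (H : GData G N t x p c) {l : ℕ} (hl : l ≤ N) :
    U l N * ((x N)⁻¹ * (p * V 0 N)⁻¹) * (V l N)⁻¹ * x l
      = (U 0 l)⁻¹ * (c⁻¹ * (U 0 N * p)⁻¹) * U 0 l := by
  rw [mul_assoc, H.Vx hl le_rfl]
  have := congrArg (·⁻¹) H.conj
  have h2 := seg_mul t (Nat.zero_le l) hl
  have h3 : (x N)⁻¹ * (p * V 0 N)⁻¹ * x N = (U 0 N)⁻¹ * (c⁻¹ * (U 0 N * p)⁻¹) * U 0 N := by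
    rw [(H.cc (U 0 N * p)).inv_inv.eq]
    simp only [mul_inv_rev, inv_inv, mul_assoc] at this ⊢
    exact this
  calc _ = U l N * ((x N)⁻¹ * (p * V 0 N)⁻¹ * x N) * (U l N)⁻¹ := by group
    _ = _ := by rw [h3, ← h2]; group

/-- First group identity for the third claim. -/
theorem g3 (H : GData G N t x p c) {i j : ℕ} (hij : i < j) (hj : j ≤ N) :
    U j N * (x N)⁻¹ * (c * x N * p * U 0 i * V (i + 1) N) * (V j N)⁻¹
      = V i N * (U 0 (j - 1))⁻¹ * (c * (U 0 N * p)) * (V j N)⁻¹ * U 0 i := by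
  obtain ⟨j, rfl⟩ : ∃ m, j = m + 1 := ⟨j - 1, by omega⟩
  obtain ⟨M, rfl⟩ : ∃ m, N = m + 1 := ⟨N - 1, by omega⟩
  simp only [Nat.add_sub_cancel]
  have e1 : U (j + 1) (M + 1) * (x (M + 1))⁻¹ * (c * x (M + 1) * p * U 0 i * V (i + 1) (M + 1))
        * (V (j + 1) (M + 1))⁻¹
      = c * (U (j + 1) (M + 1) * p * U 0 i * V (i + 1) (M + 1) * (V (j + 1) (M + 1))⁻¹) := by
    rw [(H.cc (x (M+1))).eq]
    have := (H.cc (U (j + 1) (M + 1))).eq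
    simp only [mul_assoc, inv_mul_cancel_left]
    rw [← mul_assoc, ← this]; simp only [mul_assoc]
  have e2 : V i (M + 1) * (U 0 j)⁻¹ * (c * (U 0 (M + 1) * p)) * (V (j + 1) (M + 1))⁻¹ * U 0 i
      = c * (V i (M + 1) * (U 0 j)⁻¹ * (U 0 (M + 1) * p) * (V (j + 1) (M + 1))⁻¹ * U 0 i) := by
    have := (H.cc (V i (M + 1) * (U 0 j)⁻¹)).eq
    rw [← mul_assoc (V i (M + 1) * (U 0 j)⁻¹) c, ← this]; simp only [mul_assoc]
  rw [e1, e2]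
  congr 1
  have c1 : U 0 i * V (i + 1) (M + 1) = V (i + 1) (M + 1) * U 0 i :=
    H.UcV (by omega) (by omega) (by omega) le_rfl (by omega)
  have c2 : U 0 i * (V (j + 1) (M + 1))⁻¹ = (V (j + 1) (M + 1))⁻¹ * U 0 i :=
    (H.UcV (by omega) (by omega) (by omega) le_rfl (by omega)).inv_right
  have h1 := H.pV (a := i) (b := M) (by omega) (by omega)
  have h2 := H.VU (a := i) (b := M + 1) (d := j) (e := M) (by omega) (by omega) (by omega) le_rfl
  have h3 := seg_mul t (Nat.zero_le j) (by omega : j ≤ M + 1)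
  have h4 := seg_succ t (by omega : j ≤ M)
  have h5 := seg_succ (fun k => (t k)⁻¹) (by omega : i ≤ M)
  calc _ = U (j + 1) (M + 1) * p * (U 0 i * V (i + 1) (M + 1)) * (V (j + 1) (M + 1))⁻¹ := by group
    _ = U (j + 1) (M + 1) * (p * V (i + 1) (M + 1)) * (U 0 i * (V (j + 1) (M + 1))⁻¹) := by
        rw [c1]; group
    _ = U (j + 1) (M + 1) * (V i M * (t M)⁻¹) * t M * p * (V (j + 1) (M + 1))⁻¹ * U 0 i := by
        rw [h1, c2]; group
    _ = (U (j + 1) (M + 1) * V i (M + 1)) * t M * p * (V (j + 1) (M + 1))⁻¹ * U 0 i := by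
        rw [h5]
    _ = V i (M + 1) * (U j M * t M) * p * (V (j + 1) (M + 1))⁻¹ * U 0 i := by
        rw [← h2]; group
    _ = _ := by rw [← h4, ← h3]; group

theorem g3' (H : GData G N t x p c) {i j : ℕ} (hij : i < j) (hj : j ≤ N) :
    U j N * (x N)⁻¹ * ((p * V 0 N)⁻¹ * (c * x N * p * U 0 i * V (i + 1) N) * (p * V 0 N)⁻¹)
        * (V j N)⁻¹
      = V i N * (U 0 (j - 1))⁻¹ * (p * V 0 N)⁻¹ * (V j N)⁻¹ * U 0 i := by
  have hc : (x N)⁻¹ * (p * V 0 N)⁻¹ * (c * x N * p) = (U 0 N)⁻¹ := by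
    have h := H.conj
    have h' : (x N)⁻¹ * (p * V 0 N) * x N = c * (p * U 0 N) := by
      rw [h, ← mul_assoc _ c, ← (H.cc _).eq]; group
    have h'' : p * V 0 N = x N * (c * (p * U 0 N)) * (x N)⁻¹ := by rw [← h']; group
    have h3 : x N * (c * (p * U 0 N)) = c * (x N * (p * U 0 N)) := by
      rw [← mul_assoc, ← (H.cc (x N)).eq, mul_assoc]
    rw [h'', h3]
    group
  have hy : U 0 i * (p * V 0 N)⁻¹ = (p * V 0 N)⁻¹ * U 0 i :=
    (Commute.inv_left (commute_seg _ _ (Nat.zero_le i) fun k h1 h2 => H.yNt (by omega))).symm.eq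
  have c1 : U 0 i * V (i + 1) N = V (i + 1) N * U 0 i :=
    H.UcV (by omega) (by omega) (by omega) le_rfl (by omega)
  have c2 : U 0 i * (V j N)⁻¹ = (V j N)⁻¹ * U 0 i :=
    (H.UcV (by omega) (by omega) (by omega) le_rfl (by omega)).inv_right
  have h1 := seg_mul t (Nat.zero_le j) hj
  obtain ⟨j, rfl⟩ : ∃ m, j = m + 1 := ⟨j - 1, by omega⟩
  simp only [Nat.add_sub_cancel]
  have h2 := H.VU (a := i) (b := N) (d := i) (e := j) (by omega) (by omega) (by omega) le_rfl
  have h3 := seg_mul t (Nat.zero_le i) (by omega : i ≤ j)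
  have h3' := seg_mul t (Nat.zero_le i) (by omega : i ≤ j + 1)
  have h4 := seg_mul t (by omega : i ≤ i + 1) (by omega : i + 1 ≤ j + 1)
  have h5 := seg_mul (fun k => (t k)⁻¹) (by omega : i ≤ i + 1) (by omega : i + 1 ≤ N)
  rw [seg_one] at h4 h5
  have key : (U 0 (j + 1))⁻¹ * U 0 i * V (i + 1) N = V i N * (U 0 j)⁻¹ * U 0 i := by
    have h2' : V i N * (U i j)⁻¹ = (U (i + 1) (j + 1))⁻¹ * V i N := by
      rw [eq_inv_mul_iff_mul_eq, ← mul_assoc, ← h2]; group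
    calc (U 0 (j + 1))⁻¹ * U 0 i * V (i + 1) N = (U i (j + 1))⁻¹ * V (i + 1) N := by
          rw [← h3']; group
      _ = (U (i + 1) (j + 1))⁻¹ * ((t i)⁻¹ * V (i + 1) N) := by rw [← h4]; group
      _ = V i N * (U i j)⁻¹ := by rw [h5, ← h2']
      _ = _ := by rw [← h3]; group
  calc _ = U (j + 1) N * ((x N)⁻¹ * (p * V 0 N)⁻¹ * (c * x N * p)) * U 0 i * V (i + 1) N
        * (p * V 0 N)⁻¹ * (V (j + 1) N)⁻¹ := by group
    _ = ((U 0 (j + 1))⁻¹ * U 0 i * V (i + 1) N) * (p * V 0 N)⁻¹ * (V (j + 1) N)⁻¹ := by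
        rw [hc, ← h1]; group
    _ = V i N * (U 0 j)⁻¹ * (U 0 i * (p * V 0 N)⁻¹) * (V (j + 1) N)⁻¹ := by
        rw [key]; group
    _ = V i N * (U 0 j)⁻¹ * (p * V 0 N)⁻¹ * (U 0 i * (V (j + 1) N)⁻¹) := by
        rw [hy]; group
    _ = _ := by rw [c2]; group

theorem g4 (H : GData G N t x p c) {i j : ℕ} (hij : i < j) (hj : j ≤ N) :
    (U 0 i)⁻¹ * (U 0 (j - 1) * V j N * p * x 0) * (x 0)⁻¹ * V 0 i
      = (U 0 i)⁻¹ * V j N * (p * V 0 N) * U 0 (j - 1) * (V i N)⁻¹ := by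
  obtain ⟨j, rfl⟩ : ∃ m, j = m + 1 := ⟨j - 1, by omega⟩
  simp only [Nat.add_sub_cancel]
  have c1 : U 0 j * V (j + 1) N = V (j + 1) N * U 0 j :=
    H.UcV (by omega) (by omega) (by omega) le_rfl (by omega)
  have h1 := H.VU (a := 0) (b := N) (d := 0) (e := j) (by omega) (by omega) (by omega) le_rfl
  have h2 := H.pU (a := 0) (b := j) (by omega) (by omega)
  have h3 := seg_mul (fun k => (t k)⁻¹) (Nat.zero_le i) (by omega : i ≤ N)
  calc _ = (U 0 i)⁻¹ * (U 0 j * V (j + 1) N) * p * V 0 i := by group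
    _ = (U 0 i)⁻¹ * V (j + 1) N * (U 0 j * p) * V 0 i := by rw [c1]; group
    _ = (U 0 i)⁻¹ * V (j + 1) N * p * (U (0 + 1) (j + 1) * (V 0 i * V i N)) * (V i N)⁻¹ := by
        rw [← h2]; group
    _ = _ := by rw [h3, ← h1]; group

theorem g4' (H : GData G N t x p c) {i j : ℕ} (hij : i < j) (hj : j ≤ N) :
    (U 0 i)⁻¹ * ((U 0 N * p)⁻¹ * (U 0 (j - 1) * V j N * p * x 0) * (U 0 N * p)⁻¹)
        * (x 0)⁻¹ * V 0 i
      = c * ((U 0 i)⁻¹ * V j N * (U 0 N * p)⁻¹ * U 0 (j - 1) * (V i N)⁻¹) := by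
  have hx := H.xU (Nat.zero_le N) le_rfl
  have hc : p * x 0 * (U 0 N * p)⁻¹ * (x 0)⁻¹ = c * (V 0 N)⁻¹ := by
    have e : (U 0 N)⁻¹ = (x N)⁻¹ * (V 0 N)⁻¹ * x 0 := by
      have : U 0 N = (x 0)⁻¹ * (V 0 N * x N) := by rw [← hx]; group
      rw [this]; group
    rw [H.px0, mul_inv_rev, e]; group
  obtain ⟨j, rfl⟩ : ∃ m, j = m + 1 := ⟨j - 1, by omega⟩
  simp only [Nat.add_sub_cancel]
  have c1 : U 0 j * V (j + 1) N = V (j + 1) N * U 0 j :=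
    H.UcV (by omega) (by omega) (by omega) le_rfl (by omega)
  have hy : (U 0 N * p)⁻¹ * V (j + 1) N = V (j + 1) N * (U 0 N * p)⁻¹ := by
    apply (Commute.inv_left _).eq
    apply commute_seg _ _ hj
    intro k h1 h2
    apply Commute.inv_right
    obtain ⟨k, rfl⟩ : ∃ m, k = m + 1 := ⟨k - 1, by omega⟩
    exact H.y0t h2
  have h3 := seg_mul (fun k => (t k)⁻¹) (Nat.zero_le i) (by omega : i ≤ N)
  calc _ = (U 0 i)⁻¹ * (U 0 N * p)⁻¹ * (U 0 j * V (j + 1) N)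
          * (p * x 0 * (U 0 N * p)⁻¹ * (x 0)⁻¹) * V 0 i := by group
    _ = (U 0 i)⁻¹ * ((U 0 N * p)⁻¹ * V (j + 1) N) * U 0 j * c * (V i N)⁻¹ := by
        rw [hc, c1, ← h3]; group
    _ = (U 0 i)⁻¹ * V (j + 1) N * (U 0 N * p)⁻¹ * U 0 j * c * (V i N)⁻¹ := by
        rw [hy]; group
    _ = _ := by rw [← (H.cc _).eq, mul_assoc]

end GData

/-! ### Ring level -/

theorem comm_aux {F M : Type*} [Field F] [Ring M] [Algebra F M] (δ r s : F) (a b y x g : Mˣ)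
    (hax : Commute x a) (hbx : Commute x b)
    (h : ((y * x : Mˣ) : M) = ((x * y : Mˣ) : M) + δ • (g : M)) :
    (a : M) * (r • (y : M) - s • ((y⁻¹ : Mˣ) : M)) * b * x
        - x * (a * (r • (y : M) - s • ((y⁻¹ : Mˣ) : M)) * b)
      = δ • (r • ((a * g * b : Mˣ) : M) + s • ((a * (y⁻¹ * g * y⁻¹) * b : Mˣ) : M)) := by
  have h' : ((y⁻¹ : Mˣ) : M) * x = x * ((y⁻¹ : Mˣ) : M) - δ • (((y⁻¹ * g * y⁻¹ : Mˣ) : M)) := by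
    have e1 : ((y⁻¹ : Mˣ) : M) * ((y * x : Mˣ) : M) * ((y⁻¹ : Mˣ) : M)
        = x * ((y⁻¹ : Mˣ) : M) := by
      rw [← Units.val_mul, ← Units.val_mul, ← Units.val_mul]; congr 1; group
    have e2 : ((y⁻¹ : Mˣ) : M) * ((x * y : Mˣ) : M) * ((y⁻¹ : Mˣ) : M)
        = ((y⁻¹ : Mˣ) : M) * x := by
      rw [← Units.val_mul, ← Units.val_mul, ← Units.val_mul]; congr 1; group
    rw [h, mul_add, add_mul, e2] at e1
    rw [← e1]
    simp [mul_assoc]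
  have hb : (b : M) * x = x * b := by
    rw [← Units.val_mul, ← Units.val_mul, hbx.eq]
  have ha : (x : M) * a = a * x := by
    rw [← Units.val_mul, ← Units.val_mul, hax.eq]
  have hy : (y : M) * x = x * y + δ • (g : M) := by simpa using h
  have key : (r • (y : M) - s • ((y⁻¹ : Mˣ) : M)) * x - x * (r • (y : M) - s • ((y⁻¹ : Mˣ) : M))
      = δ • (r • (g : M) + s • ((y⁻¹ * g * y⁻¹ : Mˣ) : M)) := by
    rw [sub_mul, mul_sub, smul_mul_assoc, smul_mul_assoc, hy, h', mul_smul_comm, mul_smul_comm,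
      smul_add, smul_sub, smul_add, smul_comm r δ, smul_comm s δ]
    abel
  set Z := r • (y : M) - s • ((y⁻¹ : Mˣ) : M) with hZ
  calc (a : M) * Z * b * x - x * (a * Z * b) = a * (Z * x - x * Z) * b := by
        rw [mul_assoc _ (b : M), hb, ← mul_assoc (x : M), ← mul_assoc (x : M), ha]
        noncomm_ring
    _ = _ := by
        rw [key]
        simp only [Units.val_mul, mul_smul_comm, smul_mul_assoc, mul_add, add_mul, mul_assoc]

section
variable {F M : Type*} [Field F] [Ring M] [Algebra F M] {N : ℕ} {t x : ℕ → Mˣ} {p c : Mˣ} {δ q : F}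

local notation "U" => seg t
local notation "V" => seg (fun k => (t k)⁻¹)

theorem commN (H : GData Mˣ N t x p c)
    (hδ : ∀ k, k < N → (((t k)⁻¹ : Mˣ) : M) = (t k : M) + δ • 1)
    {i : ℕ} (hi : i < N) :
    ((p * V 0 N * x i : Mˣ) : M) = ((x i * (p * V 0 N) : Mˣ) : M)
      + δ • ((c * x N * p * U 0 i * V (i + 1) N : Mˣ) : M) := by
  have gen : ∀ a b : Mˣ, ((a * (t i)⁻¹ * x i * b : Mˣ) : M)
      = ((a * x (i + 1) * (t i)⁻¹ * b : Mˣ) : M) + δ • ((a * x i * b : Mˣ) : M) := by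
    intro a b
    have e : a * x (i + 1) * (t i)⁻¹ * b = a * t i * x i * b := by
      rw [← H.tx i hi]; group
    rw [e]
    simp only [Units.val_mul, hδ i hi]
    simp [mul_add, add_mul]
  have h1 := seg_mul (fun k => (t k)⁻¹) (Nat.zero_le i) hi.le
  have h2 := seg_mul (fun k => (t k)⁻¹) (by omega : i ≤ i + 1) (by omega : i + 1 ≤ N)
  rw [seg_one] at h2
  have c1 := (H.txc'' (a := i + 1) (b := N) (m := i) (by omega) le_rfl (by omega) (by omega)).eq
  have c2 := (H.txc'' (a := 0) (b := i) (m := i + 1) (by omega) (by omega) (by omega) (by omega)).eq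
  have h3 := H.xU (Nat.zero_le i) hi.le
  have := gen (p * V 0 i) (V (i + 1) N)
  have a1 : p * V 0 i * (t i)⁻¹ * x i * V (i + 1) N = p * V 0 N * x i := by
    rw [← h1, ← h2, mul_assoc _ (x i), c1]; group
  have a2 : p * V 0 i * x (i + 1) * (t i)⁻¹ * V (i + 1) N = x i * (p * V 0 N) := by
    rw [← h1, ← h2, mul_assoc p, ← c2, ← mul_assoc p, H.px i hi]; group
  have a3 : p * V 0 i * x i * V (i + 1) N = c * x N * p * U 0 i * V (i + 1) N := by
    rw [mul_assoc p, ← h3, ← mul_assoc p, H.px0]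
  rw [a1, a2, a3] at this
  exact this

theorem comm0 (H : GData Mˣ N t x p c)
    (hδ : ∀ k, k < N → (((t k)⁻¹ : Mˣ) : M) = (t k : M) + δ • 1)
    {m : ℕ} (hm : m < N) :
    ((U 0 N * p * x (m + 1) : Mˣ) : M) = ((x (m + 1) * (U 0 N * p) : Mˣ) : M)
      + δ • ((c⁻¹ * (U 0 m * V (m + 1) N * p * x 0) : Mˣ) : M) := by
  have gen : ∀ a b : Mˣ, ((a * t m * x m * b : Mˣ) : M)
      = ((a * x (m + 1) * t m * b : Mˣ) : M) + δ • ((a * x (m + 1) * b : Mˣ) : M) := by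
    intro a b
    have e : a * t m * x m * b = a * x (m + 1) * (t m)⁻¹ * b := by
      rw [← H.tx m hm]; group
    rw [e]
    simp only [Units.val_mul, hδ m hm]
    simp [mul_add, add_mul]
  have h1 := seg_mul t (Nat.zero_le m) hm.le
  have h2 := seg_mul t (by omega : m ≤ m + 1) (by omega : m + 1 ≤ N)
  rw [seg_one] at h2
  have c1 := (H.txc' (a := m + 1) (b := N) (m := m) (by omega) le_rfl (by omega) (by omega)).eq
  have c2 := (H.txc' (a := 0) (b := m) (m := m + 1) (by omega) (by omega) (by omega) (by omega)).eq
  have h3 := H.xU (by omega : m + 1 ≤ N) le_rfl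
  have := gen (U 0 m) (U (m + 1) N * p)
  have a1 : U 0 m * t m * x m * (U (m + 1) N * p) = U 0 N * p * x (m + 1) := by
    rw [← h1, ← h2, mul_assoc _ p, H.px m hm, mul_assoc _ (x m), ← mul_assoc (x m), c1]; group
  have a2 : U 0 m * x (m + 1) * t m * (U (m + 1) N * p) = x (m + 1) * (U 0 N * p) := by
    rw [← h1, ← h2, ← c2]; group
  have a3 : U 0 m * x (m + 1) * (U (m + 1) N * p) = c⁻¹ * (U 0 m * V (m + 1) N * p * x 0) := by
    rw [eq_inv_mul_iff_mul_eq, mul_assoc _ (x (m + 1)), ← mul_assoc (x (m + 1)), h3,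
      mul_assoc _ p, H.px0, ← mul_assoc c, (H.cc (U 0 m)).eq, mul_assoc, ← mul_assoc c,
      ← mul_assoc c, (H.cc (V (m + 1) N)).eq]
    group
  rw [a1, a2, a3] at this
  exact this

theorem val_c (hc : (c : M) = q • 1) (g : Mˣ) : ((c * g : Mˣ) : M) = q • (g : M) := by
  simp [hc]

theorem val_cinv (hq : q ≠ 0) (hc : (c : M) = q • 1) (g : Mˣ) :
    ((c⁻¹ * g : Mˣ) : M) = q⁻¹ • (g : M) := by
  have := val_c hc (c⁻¹ * g)
  rw [mul_inv_cancel_left] at this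
  rw [this, smul_smul, inv_mul_cancel₀ hq, one_smul]

/-- The operator `D_i` without its scalar factor. -/
def DD (N : ℕ) (t' x' : ℕ → Mˣ) (p' : Mˣ) (i : ℕ) : M :=
  ((seg t' i N : Mˣ) : M) * ((((x' N)⁻¹ : Mˣ) : M) * (((p' * seg (fun k => (t' k)⁻¹) 0 N : Mˣ) : M)
    - (((p' * seg (fun k => (t' k)⁻¹) 0 N)⁻¹ : Mˣ) : M)))
    * (((seg (fun k => (t' k)⁻¹) i N)⁻¹ : Mˣ) : M)

theorem claim1 (H : GData Mˣ N t x p c) {l : ℕ} (hl : l ≤ N) :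
    (x l : M) * DD N t x p l = ((V l N : Mˣ) : M) *
      (((p * V 0 N : Mˣ) : M) - (((p * V 0 N)⁻¹ : Mˣ) : M)) * (((V l N)⁻¹ : Mˣ) : M) := by
  have h : x l * U l N * (x N)⁻¹ = V l N := by rw [H.xU hl le_rfl]; group
  have h' := congrArg (Units.val) h
  rw [Units.val_mul, Units.val_mul] at h'
  rw [DD]
  simp only [← mul_assoc]
  rw [h']

theorem claim2 (H : GData Mˣ N t x p c) (hq : q ≠ 0) (hc : (c : M) = q • 1) {l : ℕ} (hl : l ≤ N) :
    DD N t x p l * (x l : M) = (((U 0 l)⁻¹ : Mˣ) : M) *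
      (q • ((U 0 N * p : Mˣ) : M) - q⁻¹ • (((U 0 N * p)⁻¹ : Mˣ) : M)) * ((U 0 l : Mˣ) : M) := by
  have h1 := congrArg (Units.val) (H.g2 hl)
  have h2 := congrArg (Units.val) (H.g2' hl)
  rw [← val_c hc, ← val_cinv hq hc, mul_sub, sub_mul]
  simp only [← Units.val_mul]
  rw [← h1, ← h2, DD]
  simp only [Units.val_mul, mul_sub, sub_mul, mul_assoc]

theorem claim3 (H : GData Mˣ N t x p c)
    (hδ : ∀ k, k < N → (((t k)⁻¹ : Mˣ) : M) = (t k : M) + δ • 1)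
    (hc : (c : M) = q • 1) {i j : ℕ} (hij : i < j) (hj : j ≤ N) :
    DD N t x p j * (x i : M) - (x i : M) * DD N t x p j = δ • (((V i N : Mˣ) : M) *
      (((U 0 (j - 1))⁻¹ : Mˣ) : M) *
      (q • ((U 0 N * p : Mˣ) : M) + (((p * V 0 N)⁻¹ : Mˣ) : M)) *
      (((V j N)⁻¹ : Mˣ) : M) * ((U 0 i : Mˣ) : M)) := by
  have hxx : Commute (x i) (x N) := H.xx _ _
  have := comm_aux δ (1 : F) 1 (U j N * (x N)⁻¹) (V j N)⁻¹ (p * V 0 N) (x i) _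
    ((H.txc' hj le_rfl (by omega) (by omega)).mul_right hxx.inv_right)
    (H.txc'' hj le_rfl (by omega) (by omega)).inv_right
    (commN H hδ (by omega))
  rw [H.g3 hij hj, H.g3' hij hj] at this
  rw [← val_c hc, DD]
  simp only [one_smul, Units.val_mul, mul_assoc, mul_add, add_mul] at this ⊢
  exact this

theorem claim4 (H : GData Mˣ N t x p c) (hq : q ≠ 0)
    (hδ : ∀ k, k < N → (((t k)⁻¹ : Mˣ) : M) = (t k : M) + δ • 1)
    (hc : (c : M) = q • 1) {i j : ℕ} (hij : i < j) (hj : j ≤ N) :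
    DD N t x p i * (x j : M) - (x j : M) * DD N t x p i = δ • ((((U 0 i)⁻¹ : Mˣ) : M) *
      ((V j N : Mˣ) : M) *
      (q⁻¹ • (((U 0 N * p)⁻¹ : Mˣ) : M) + ((p * V 0 N : Mˣ) : M)) *
      ((U 0 (j - 1) : Mˣ) : M) * (((V i N)⁻¹ : Mˣ) : M)) := by
  have hxx : Commute (x j) (x 0) := H.xx _ _
  have hD : DD N t x p i = (((U 0 i)⁻¹ : Mˣ) : M) *
      (q • ((U 0 N * p : Mˣ) : M) - q⁻¹ • (((U 0 N * p)⁻¹ : Mˣ) : M)) *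
        (((x 0)⁻¹ * V 0 i : Mˣ) : M) := by
    have e : (x 0)⁻¹ * V 0 i = U 0 i * (x i)⁻¹ := by
      rw [inv_mul_eq_iff_eq_mul, ← mul_assoc, H.xU (Nat.zero_le i) (by omega)]; group
    have h2 := claim2 H hq hc (l := i) (by omega)
    rw [e, Units.val_mul (U 0 i), ← mul_assoc, ← h2, mul_assoc, Units.mul_inv, mul_one]
  obtain ⟨m, rfl⟩ : ∃ m, j = m + 1 := ⟨j - 1, by omega⟩
  have := comm_aux δ q q⁻¹ (U 0 i)⁻¹ ((x 0)⁻¹ * V 0 i) (U 0 N * p) (x (m + 1)) _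
    (H.txc' (Nat.zero_le i) (by omega) hj (by omega)).inv_right
    (hxx.inv_right.mul_right (H.txc'' (Nat.zero_le i) (by omega) hj (by omega)))
    (comm0 H hδ (by omega))
  rw [hD, this]
  have h4 := H.g4 hij hj
  have h4' := H.g4' hij hj
  have e1 : (U 0 i)⁻¹ * (c⁻¹ * (U 0 m * V (m + 1) N * p * x 0)) * ((x 0)⁻¹ * V 0 i)
      = c⁻¹ * ((U 0 i)⁻¹ * V (m + 1) N * (p * V 0 N) * U 0 m * (V i N)⁻¹) := by
    simp only [Nat.add_sub_cancel] at h4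
    rw [← h4, ← mul_assoc _ c⁻¹, ← (H.cc (U 0 i)⁻¹).inv_left.eq]; group
  have e2 : (U 0 i)⁻¹ * ((U 0 N * p)⁻¹ * (c⁻¹ * (U 0 m * V (m + 1) N * p * x 0)) * (U 0 N * p)⁻¹)
        * ((x 0)⁻¹ * V 0 i)
      = (U 0 i)⁻¹ * V (m + 1) N * (U 0 N * p)⁻¹ * U 0 m * (V i N)⁻¹ := by
    simp only [Nat.add_sub_cancel] at h4'
    rw [← mul_left_cancel_iff (a := c), ← h4', ← mul_assoc (U 0 N * p)⁻¹ c⁻¹,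
      ← (H.cc (U 0 N * p)⁻¹).inv_left.eq]
    simp only [← mul_assoc]
    rw [mul_assoc c, ← (H.cc (U 0 i)⁻¹).inv_left.eq]
    group
  rw [e1, e2, val_cinv hq hc, smul_smul, mul_inv_cancel₀ hq, one_smul]
  simp only [Nat.add_sub_cancel, Units.val_mul, mul_assoc, mul_add, add_mul, smul_mul_assoc,
    mul_smul_comm]
  rw [add_comm]
end

/-! ### The Laurent polynomial level -/

section
variable {F : Type*} [Field F] {m : ℕ}

theorem mono_add' (a b : Fin m →₀ ℤ) (c d : F) : (mono a c : Laur F m) * mono b d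
    = mono (a + b) (c * d) := by
  simp [mono, AddMonoidAlgebra.single_mul_single]

theorem Laur_one : (1 : Laur F m) = mono 0 1 := rfl

theorem Xel_ne (i : Fin m) : (Xel i : Laur F m) ≠ 0 := by
  simp [Xel, mono]

theorem Xel_sub_ne {i j : Fin m} (h : i ≠ j) : (Xel i - Xel j : Laur F m) ≠ 0 := by
  rw [sub_ne_zero]
  intro e
  simp only [Xel, mono] at e
  have h2 : (Finsupp.single i 1 : Fin m →₀ ℤ) = Finsupp.single j 1 := by
    by_contra hne
    have := congrArg (fun f : Laur F m => f.coeff (Finsupp.single i 1)) e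
    simp [Finsupp.single_apply, Ne.symm hne] at this
  exact h (Finsupp.single_left_injective one_ne_zero h2)

theorem Xel_mul_Xinv (i : Fin m) : (Xel i * XinvEl i : Laur F m) = 1 := by
  rw [Xel, XinvEl, mono_add', Laur_one, ← Finsupp.single_add]; simp

theorem lin_ext {f g : Module.End F (Laur F m)} (h : ∀ a c, f (mono a c) = g (mono a c)) :
    f = g := by
  apply LinearMap.ext
  intro p
  induction p using AddMonoidAlgebra.induction_linear with
  | zero => simp
  | add x y hx hy => rw [map_add, map_add, hx, hy]
  | single a c => exact h a c

theorem vanish (E : Module.End F (Laur F m)) (h1 : E 1 = 0)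
    (hX : ∀ i, ∃ u : Laur F m, u ≠ 0 ∧ ∀ p, E (Xel i * p) = u * E p) : E = 0 := by
  have step : ∀ i a, E (mono (Finsupp.single i 1 + a) 1) = 0 ↔ E (mono a 1) = 0 := by
    intro i a
    obtain ⟨u, hu, h⟩ := hX i
    have e : (mono (Finsupp.single i 1 + a) 1 : Laur F m) = Xel i * mono a 1 := by
      rw [Xel, mono_add', one_mul]
    rw [e, h]
    simp [hu]
  have all : ∀ a, E (mono a 1) = 0 := by
    intro a
    induction a using Finsupp.induction with
    | zero => exact h1
    | single_add i b f _ _ ih =>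
      have : ∀ b : ℤ, E (mono (Finsupp.single i b + f) 1) = 0 := by
        intro b
        induction b using Int.induction_on with
        | zero => simpa using ih
        | succ k hk =>
          rw [← step i, ← add_assoc, ← Finsupp.single_add] at hk
          rwa [add_comm (k : ℤ)]
        | pred k hk =>
          rw [← step i, ← add_assoc, ← Finsupp.single_add]
          rwa [add_sub_cancel]
      exact this b
  apply lin_ext
  intro a c
  have e : (mono a c : Laur F m) = c • mono a 1 := by
    simp [mono]
  rw [e, map_smul, all]; simp

theorem emd_add (w : Equiv.Perm (Fin m)) (a b : Fin m →₀ ℤ) :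
    Finsupp.equivMapDomain w (a + b)
      = Finsupp.equivMapDomain w a + Finsupp.equivMapDomain w b := by
  ext; simp [Finsupp.equivMapDomain_apply]

theorem W_mul (W : Equiv.Perm (Fin m) → Module.End F (Laur F m))
    (hW : ∀ (w : Equiv.Perm (Fin m)) (a : Fin m →₀ ℤ) (c : F),
      W w (mono a c) = mono (Finsupp.equivMapDomain w a) c) (w : Equiv.Perm (Fin m)) (i : Fin m)
    (p : Laur F m) : W w (Xel i * p) = Xel (w i) * W w p := by
  have : W w * mulOp (Xel i) = mulOp (Xel (w i)) * W w := by
    apply lin_ext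
    intro a c
    simp only [Module.End.mul_apply, mulOp, LinearMap.mulLeft_apply, Xel, mono_add', hW, emd_add,
      Finsupp.equivMapDomain_single]
  exact congrArg (fun f => f p) this

theorem W_one (W : Equiv.Perm (Fin m) → Module.End F (Laur F m))
    (hW : ∀ (w : Equiv.Perm (Fin m)) (a : Fin m →₀ ℤ) (c : F),
      W w (mono a c) = mono (Finsupp.equivMapDomain w a) c) (w : Equiv.Perm (Fin m)) :
    W w 1 = 1 := by
  rw [Laur_one, hW, Finsupp.equivMapDomain_zero]

theorem pi_mul (q : F) (hq : q ≠ 0) [NeZero m] (P : Module.End F (Laur F m))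
    (hP : ∀ (a : Fin m →₀ ℤ) (c : F),
      P (mono a c) = q ^ (a 0) • mono (Finsupp.equivMapDomain (finRotate m).symm a) c)
    (i : Fin m) (p : Laur F m) :
    P (Xel i * p) = (if i = 0 then q else 1) • (Xel ((finRotate m).symm i) * P p) := by
  have : P * mulOp (Xel i)
      = (if i = 0 then q else 1) • (mulOp (Xel ((finRotate m).symm i)) * P) := by
    apply lin_ext
    intro a c
    simp only [Module.End.mul_apply, LinearMap.smul_apply, mulOp, LinearMap.mulLeft_apply, Xel,
      mono_add', hP, emd_add, Finsupp.equivMapDomain_single, mul_smul_comm, smul_smul]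
    congr 1
    by_cases h : i = 0
    · subst h; simp [zpow_add₀ hq]
    · simp [h]
  exact congrArg (fun f => f p) this

/-- Action of a Demazure–Lusztig operator on products. -/
structure TAct (A : Module.End F (Laur F m)) (e : F) (x y : Fin m) : Prop where
  lo : ∀ p, A (Xel x * p) = Xel y * (A p - e • p)
  hi : ∀ p, A (Xel y * p) = Xel x * A p + e • (Xel y * p)
  ot : ∀ z, z ≠ x → z ≠ y → ∀ p, A (Xel z * p) = Xel z * A p
  sq : ∀ p, A (A p) = p + e • A p

theorem tact (τ : F) (W : Equiv.Perm (Fin m) → Module.End F (Laur F m))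
    (hW : ∀ (w : Equiv.Perm (Fin m)) (a : Fin m →₀ ℤ) (c : F),
      W w (mono a c) = mono (Finsupp.equivMapDomain w a) c)
    (A Ai : Module.End F (Laur F m)) (x y : Fin m) (hxy : y ≠ x)
    (hT : ∀ p, (Xel y - Xel x) * A p = (τ⁻¹ • Xel y - τ • Xel x) * W (Equiv.swap x y) p
      + (τ - τ⁻¹) • (Xel y * p))
    (hAi : Ai = A + (τ⁻¹ - τ) • (1 : Module.End F (Laur F m))) (hinv : A * Ai = 1) :
    A 1 = τ • 1 ∧ TAct A (τ - τ⁻¹) x y := by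
  have hne := Xel_sub_ne (F := F) hxy
  refine ⟨?_, ?_, ?_, ?_, ?_⟩
  · skip
    apply mul_left_cancel₀ hne
    rw [hT, W_one W hW]
    simp only [Algebra.smul_def, map_sub]
    ring
  · intro p
    apply mul_left_cancel₀ hne
    have h := hT p
    rw [hT, W_mul W hW, Equiv.swap_apply_left]
    simp only [Algebra.smul_def, map_sub] at h ⊢
    linear_combination (- Xel y) * h
  · intro p
    apply mul_left_cancel₀ hne
    have h := hT p
    rw [hT, W_mul W hW, Equiv.swap_apply_right]
    simp only [Algebra.smul_def, map_sub] at h ⊢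
    linear_combination (- Xel x) * h
  · intro z h1 h2 p
    apply mul_left_cancel₀ hne
    have h := hT p
    rw [hT, W_mul W hW, Equiv.swap_apply_of_ne_of_ne h1 h2]
    simp only [Algebra.smul_def, map_sub] at h ⊢
    linear_combination (- Xel z) * h
  · intro p
    have h := congrArg (fun f => f p) hinv
    simp only [hAi, Module.End.mul_apply, Module.End.one_apply, LinearMap.add_apply,
      LinearMap.smul_apply, map_add, map_smul] at h
    rw [← sub_eq_zero, ← sub_eq_zero.mpr h]
    module

theorem tact_braid {A B : Module.End F (Laur F m)} {τ : F} {x y z : Fin m}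
    (hA : TAct A (τ - τ⁻¹) x y) (hB : TAct B (τ - τ⁻¹) y z) (hA1 : A 1 = τ • 1) (hB1 : B 1 = τ • 1)
    (hxy : x ≠ y) (hyz : y ≠ z) (hxz : x ≠ z) : A * B * A = B * A * B := by
  rw [← sub_eq_zero]
  apply vanish
  · simp [hA1, hB1]
  · intro i
    generalize τ - τ⁻¹ = e at *
    by_cases h1 : i = x
    · subst h1
      refine ⟨Xel z, Xel_ne _, fun p => ?_⟩
      simp only [LinearMap.sub_apply, Module.End.mul_apply, hA.lo, hB.lo, hB.ot _ hxy hxz,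
        hA.ot _ hxz.symm hyz.symm, map_sub, map_smul, hA.sq, hB.sq]
      simp only [Algebra.smul_def]
      ring
    by_cases h2 : i = y
    · subst h2
      refine ⟨Xel i, Xel_ne _, fun p => ?_⟩
      simp only [LinearMap.sub_apply, Module.End.mul_apply, hA.lo, hA.hi, hB.lo, hB.hi,
        hB.ot _ hxy hxz,
        hA.ot _ hxz.symm hyz.symm, map_sub, map_add, map_smul, hA.sq, hB.sq]
      simp only [Algebra.smul_def]
      ring
    by_cases h3 : i = z
    · subst h3
      refine ⟨Xel x, Xel_ne _, fun p => ?_⟩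
      simp only [LinearMap.sub_apply, Module.End.mul_apply, hA.lo, hA.hi, hB.lo, hB.hi,
        hB.ot _ hxy hxz,
        hA.ot _ hxz.symm hyz.symm, map_sub, map_add, map_smul, hA.sq, hB.sq]
      simp only [Algebra.smul_def]
      ring
    refine ⟨Xel i, Xel_ne _, fun p => ?_⟩
    simp only [LinearMap.sub_apply, Module.End.mul_apply, hA.ot i h1 h2, hB.ot i h2 h3]
    ring

theorem tact_far {A B : Module.End F (Laur F m)} {τ : F} {x y z w : Fin m}
    (hA : TAct A (τ - τ⁻¹) x y) (hB : TAct B (τ - τ⁻¹) z w) (hA1 : A 1 = τ • 1) (hB1 : B 1 = τ • 1)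
    (hxz : x ≠ z) (hxw : x ≠ w) (hyz : y ≠ z) (hyw : y ≠ w) : A * B = B * A := by
  rw [← sub_eq_zero]
  have hBx := hB.ot x hxz hxw
  have hBy := hB.ot y hyz hyw
  have hAz := hA.ot z hxz.symm hyz.symm
  have hAw := hA.ot w hxw.symm hyw.symm
  apply vanish
  · simp [hA1, hB1]
  · intro i
    generalize τ - τ⁻¹ = e at *
    by_cases h1 : i = x
    · subst h1
      refine ⟨Xel y, Xel_ne _, fun p => ?_⟩
      simp only [LinearMap.sub_apply, Module.End.mul_apply, hA.lo, hBx, hBy, map_sub, map_smul]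
      simp only [Algebra.smul_def]
      ring
    by_cases h2 : i = y
    · subst h2
      refine ⟨Xel x, Xel_ne _, fun p => ?_⟩
      simp only [LinearMap.sub_apply, Module.End.mul_apply, hA.hi, hBx, hBy, map_sub, map_smul,
        map_add]
      simp only [Algebra.smul_def]
      ring
    by_cases h3 : i = z
    · subst h3
      refine ⟨Xel w, Xel_ne _, fun p => ?_⟩
      simp only [LinearMap.sub_apply, Module.End.mul_apply, hB.lo, hAz, hAw, map_sub, map_smul]
      simp only [Algebra.smul_def]
      ring
    by_cases h4 : i = w
    · subst h4
      refine ⟨Xel z, Xel_ne _, fun p => ?_⟩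
      simp only [LinearMap.sub_apply, Module.End.mul_apply, hB.hi, hAz, hAw, map_sub, map_smul,
        map_add]
      simp only [Algebra.smul_def]
      ring
    refine ⟨Xel i, Xel_ne _, fun p => ?_⟩
    simp only [LinearMap.sub_apply, Module.End.mul_apply, hA.ot i h1 h2, hB.ot i h3 h4]
    ring

theorem tact_pi {A B P : Module.End F (Laur F m)} {τ q : F} (hq : q ≠ 0) {x y z w : Fin m}
    (hA : TAct A (τ - τ⁻¹) x y) (hB : TAct B (τ - τ⁻¹) z w) (hA1 : A 1 = τ • 1) (hB1 : B 1 = τ • 1)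
    (hP1 : P 1 = 1) (σ : Equiv.Perm (Fin m)) (o : Fin m)
    (hP : ∀ i p, P (Xel i * p) = (if i = o then q else 1) • (Xel (σ i) * P p))
    (hx : σ z = x) (hy : σ w = y) (hz : z ≠ o) (hw : w ≠ o) : P * B = A * P := by
  rw [← sub_eq_zero]
  apply vanish
  · simp [hA1, hB1, hP1]
  · intro i
    generalize τ - τ⁻¹ = e at *
    by_cases h1 : i = z
    · subst h1
      refine ⟨Xel y, Xel_ne _, fun p => ?_⟩
      simp only [LinearMap.sub_apply, Module.End.mul_apply, hB.lo, hP, hx, hy, if_neg hz, if_neg hw,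
        one_smul, map_sub, map_smul, hA.lo]
      simp only [Algebra.smul_def]
      ring
    by_cases h2 : i = w
    · subst h2
      refine ⟨Xel x, Xel_ne _, fun p => ?_⟩
      simp only [LinearMap.sub_apply, Module.End.mul_apply, hB.hi, hP, hx, hy, if_neg hz, if_neg hw,
        one_smul, map_add, map_smul, hA.hi]
      simp only [Algebra.smul_def]
      ring
    have h3 : σ i ≠ x := by rw [← hx]; exact fun h => h1 (σ.injective h)
    have h4 : σ i ≠ y := by rw [← hy]; exact fun h => h2 (σ.injective h)
    refine ⟨(if i = o then q else 1) • Xel (σ i), ?_, fun p => ?_⟩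
    · apply smul_ne_zero _ (Xel_ne _)
      split_ifs <;> simp [hq]
    · simp only [LinearMap.sub_apply, Module.End.mul_apply, hB.ot i h1 h2, hP, map_smul,
        hA.ot _ h3 h4]
      simp only [Algebra.smul_def]
      ring

end

/-! ### Bridging -/

theorem aF_val {M : Type*} [Monoid M] (f : ℕ → M) (u : ℕ → Mˣ) {a b : ℕ} (hab : a ≤ b)
    (h : ∀ k, a ≤ k → k < b → f k = u k) : aF f a (b - a) = ((seg u a b : Mˣ) : M) := by
  change seg f a b = _
  induction b, hab using Nat.le_induction with
  | base => simp [seg_self]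
  | succ b hb ih =>
    rw [seg_succ _ hb, seg_succ _ hb, Units.val_mul, ih fun k h1 h2 => h k h1 (by omega),
      h b hb (by omega)]

theorem dF_succ {M : Type*} [Monoid M] (f : ℕ → M) {a b : ℕ} (h : a ≤ b) :
    dF f a (b + 1 - a) = f b * dF f a (b - a) := by
  obtain ⟨d, rfl⟩ := Nat.exists_eq_add_of_le h
  have e1 : a + d + 1 - a = d + 1 := by omega
  have e2 : a + d - a = d := by omega
  simp [dF, e1, e2, List.range'_concat]

theorem dF_val {M : Type*} [Monoid M] (f : ℕ → M) (u : ℕ → Mˣ) {a b : ℕ} (hab : a ≤ b)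
    (h : ∀ k, a ≤ k → k < b → f k = ((u k)⁻¹ : Mˣ)) :
    dF f a (b - a) = (((seg u a b)⁻¹ : Mˣ) : M) := by
  induction b, hab using Nat.le_induction with
  | base => simp [seg_self, dF]
  | succ b hb ih =>
    rw [dF_succ _ hb, seg_succ _ hb, mul_inv_rev, Units.val_mul,
      ih fun k h1 h2 => h k h1 (by omega), h b hb (by omega)]

theorem inv_val {M : Type*} [Monoid M] (u : Mˣ) (v : M) (h : (u : M) * v = 1) :
    v = ((u⁻¹ : Mˣ) : M) := by
  rw [← one_mul v, ← Units.inv_mul u, mul_assoc, h, mul_one]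

/-- Multiplication by `X_i` as a unit. -/
def xU' (F : Type*) [Field F] (m : ℕ) (i : ℕ) : (Module.End F (Laur F m))ˣ :=
  if h : i < m then
    { val := mulOp (Xel ⟨i, h⟩)
      inv := mulOp (XinvEl ⟨i, h⟩)
      val_inv := by
        apply LinearMap.ext; intro p
        simp only [mulOp, Module.End.mul_apply, LinearMap.mulLeft_apply, ← mul_assoc, Xel_mul_Xinv,
          one_mul, Module.End.one_apply]
      inv_val := by
        apply LinearMap.ext; intro p
        change XinvEl _ * (Xel _ * p) = p
        rw [← mul_assoc, mul_comm (XinvEl _) (Xel _), Xel_mul_Xinv, one_mul] }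
  else 1

theorem xU'_val (F : Type*) [Field F] (m : ℕ) (i : ℕ) :
    (XOp i : Module.End F (Laur F m)) = xU' F m i := by
  unfold XOp xU'; split_ifs <;> rfl

theorem xU'_inv (F : Type*) [Field F] (m : ℕ) (i : ℕ) :
    (XinvOp i : Module.End F (Laur F m)) = ((xU' F m i)⁻¹ : (Module.End F (Laur F m))ˣ) := by
  unfold XinvOp xU'; split_ifs <;> rfl

theorem XOp_apply {F : Type*} [Field F] {m : ℕ} {i : ℕ} (h : i < m) (p : Laur F m) :
    (XOp i : Module.End F (Laur F m)) p = Xel ⟨i, h⟩ * p := by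
  unfold XOp; rw [dif_pos h]; rfl

/-- Relations between `X_i` and `D_j` (indices `0`-based; the paper's
`1`-based indices `i < j` become `0`-based `i < j`). -/
theorem statement7
    (F : Type*) [Field F] (n : ℕ) [NeZero n]
    (q τ : F) (hq : q ≠ 0) (hqroot : ∀ m : ℕ, m ≠ 0 → q ^ m ≠ 1) (hτ : τ ≠ 0)
    -- the action of the symmetric group permuting the variables
    (W : Equiv.Perm (Fin n) → Module.End F (Laur F n))
    (hW : ∀ (w : Equiv.Perm (Fin n)) (a : Fin n →₀ ℤ) (c : F),
      W w (mono a c) = mono (Finsupp.equivMapDomain w a) c)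
    -- the Demazure–Lusztig operators `T_k` and their inverses `Ti k = T k + τ⁻¹ - τ`
    (T Ti : ℕ → Module.End F (Laur F n))
    (hT : ∀ (k : ℕ) (hk : k + 1 < n) (p : Laur F n),
      (Xel ⟨k + 1, hk⟩ - Xel ⟨k, Nat.lt_of_succ_lt hk⟩) * T k p
        = (τ⁻¹ • Xel ⟨k + 1, hk⟩ - τ • Xel ⟨k, Nat.lt_of_succ_lt hk⟩)
            * W (Equiv.swap ⟨k, Nat.lt_of_succ_lt hk⟩ ⟨k + 1, hk⟩) p
          + (τ - τ⁻¹) • (Xel ⟨k + 1, hk⟩ * p))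
    (hTi : ∀ k, Ti k = T k + (τ⁻¹ - τ) • (1 : Module.End F (Laur F n)))
    (hTinv : ∀ k, k + 1 < n → T k * Ti k = 1 ∧ Ti k * T k = 1)
    -- the operator `π⁻¹`
    (piInv : Module.End F (Laur F n))
    (hpiInv : ∀ (a : Fin n →₀ ℤ) (c : F),
      piInv (mono a c)
        = q ^ (a 0) • mono (Finsupp.equivMapDomain (finRotate n).symm a) c)
    -- the operators `Y_i = T_i ⋯ T_{n-1} ⬝ π⁻¹ ⬝ T_1⁻¹ ⋯ T_{i-1}⁻¹` and their inverses
    (Y Yi : ℕ → Module.End F (Laur F n))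
    (hY : ∀ i, Y i = aF T i (n - 1 - i) * piInv * aF Ti 0 i)
    (hYinv : ∀ i, i < n → Y i * Yi i = 1 ∧ Yi i * Y i = 1)
    -- the `q`-Dunkl-type operators `D_i`
    (D : ℕ → Module.End F (Laur F n))
    (hD : ∀ i, D i = aF T i (n - 1 - i)
        * ((q - q⁻¹)⁻¹ • (XinvOp (n - 1) * (Y (n - 1) - Yi (n - 1))))
        * dF T i (n - 1 - i))
    :
    (∀ l : ℕ, l < n →
      XOp l * D l
        = (q - q⁻¹)⁻¹ •
            (aF Ti l (n - 1 - l) * (Y (n - 1) - Yi (n - 1)) * dF T l (n - 1 - l))) ∧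
    (∀ l : ℕ, l < n →
      D l * XOp l
        = (q - q⁻¹)⁻¹ • (dF Ti 0 l * (q • Y 0 - q⁻¹ • Yi 0) * aF T 0 l)) ∧
    (∀ i j : ℕ, i < j → j < n →
      D j * XOp i - XOp i * D j
        = ((τ⁻¹ - τ) * (q - q⁻¹)⁻¹) •
            (aF Ti i (n - 1 - i) * dF Ti 0 (j - 1) * (q • Y 0 + Yi (n - 1))
              * dF T j (n - 1 - j) * aF T 0 i)) ∧
    (∀ i j : ℕ, i < j → j < n →
      D i * XOp j - XOp j * D i
        = ((τ⁻¹ - τ) * (q - q⁻¹)⁻¹) •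
            (dF Ti 0 i * aF Ti j (n - 1 - j) * (q⁻¹ • Yi 0 + Y (n - 1))
              * aF T 0 (j - 1) * dF T i (n - 1 - i))) := by
  obtain ⟨N, rfl⟩ : ∃ N, n = N + 1 := ⟨n - 1, by have := NeZero.pos n; omega⟩
  simp only [Nat.add_sub_cancel] at *
  have hact : ∀ k (hk : k + 1 < N + 1), T k 1 = τ • 1 ∧
      TAct (T k) (τ - τ⁻¹) ⟨k, Nat.lt_of_succ_lt hk⟩ ⟨k + 1, hk⟩ := fun k hk =>
    tact τ W hW (T k) (Ti k) _ _ (by simp [Fin.ext_iff]) (hT k hk) (hTi k) (hTinv k hk).1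
  have hP1 : piInv 1 = 1 := by
    rw [Laur_one, hpiInv, Finsupp.equivMapDomain_zero]; simp
  have hPX := pi_mul q hq piInv hpiInv
  have hrot : ∀ k (hk : k + 1 < N + 1),
      (finRotate (N + 1)).symm ⟨k + 1, hk⟩ = ⟨k, Nat.lt_of_succ_lt hk⟩ := by
    intro k hk
    rw [Equiv.symm_apply_eq, finRotate_of_lt (by omega)]
  have hrot0 : (finRotate (N + 1)).symm 0 = ⟨N, Nat.lt_succ_self N⟩ := by
    rw [Equiv.symm_apply_eq]
    have := finRotate_last (n := N)
    rw [show (⟨N, Nat.lt_succ_self N⟩ : Fin (N + 1)) = Fin.last N from rfl, this]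
  have hz0 : ∀ k (hk : k + 1 < N + 1), (⟨k + 1, hk⟩ : Fin (N + 1)) ≠ 0 := by
    intro k hk h
    have := congrArg Fin.val h
    simp at this
  -- the units
  let t : ℕ → (Module.End F (Laur F (N + 1)))ˣ := fun k =>
    if h : k + 1 < N + 1 then ⟨T k, Ti k, (hTinv k h).1, (hTinv k h).2⟩ else 1
  have ht : ∀ k, k < N → T k = t k := by
    intro k hk; simp only [t]; rw [dif_pos (by omega)]
  have hti : ∀ k, k < N → Ti k = ((t k)⁻¹ : (Module.End F (Laur F (N + 1)))ˣ) := by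
    intro k hk; simp only [t]; rw [dif_pos (by omega)]; rfl
  let x := xU' F (N + 1)
  have hx : ∀ i, (XOp i : Module.End F (Laur F (N + 1))) = x i := xU'_val F (N + 1)
  -- dictionary for products
  have dU : ∀ a b, a ≤ b → b ≤ N → aF T a (b - a) = ((seg t a b :
      (Module.End F (Laur F (N + 1)))ˣ) : Module.End F (Laur F (N + 1))) := fun a b h1 h2 =>
    aF_val T t h1 fun k _ h4 => ht k (by omega)
  have dV : ∀ a b, a ≤ b → b ≤ N → aF Ti a (b - a) = ((seg (fun k => (t k)⁻¹) a b :
      (Module.End F (Laur F (N + 1)))ˣ) : Module.End F (Laur F (N + 1))) := fun a b h1 h2 =>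
    aF_val Ti (fun k => (t k)⁻¹) h1 fun k _ h4 => hti k (by omega)
  have dUi : ∀ a b, a ≤ b → b ≤ N → dF Ti a (b - a) = (((seg t a b)⁻¹ :
      (Module.End F (Laur F (N + 1)))ˣ) : Module.End F (Laur F (N + 1))) := fun a b h1 h2 =>
    dF_val Ti t h1 fun k _ h4 => hti k (by omega)
  have dVi : ∀ a b, a ≤ b → b ≤ N → dF T a (b - a) = (((seg (fun k => (t k)⁻¹) a b)⁻¹ :
      (Module.End F (Laur F (N + 1)))ˣ) : Module.End F (Laur F (N + 1))) := fun a b h1 h2 =>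
    dF_val T (fun k => (t k)⁻¹) h1 fun k _ h4 => by rw [inv_inv]; exact ht k (by omega)
  have dU0 : ∀ b, b ≤ N → aF T 0 b = _ := fun b h => dU 0 b (Nat.zero_le b) h
  have dV0 : ∀ b, b ≤ N → aF Ti 0 b = _ := fun b h => dV 0 b (Nat.zero_le b) h
  have dUi0 : ∀ b, b ≤ N → dF Ti 0 b = _ := fun b h => dUi 0 b (Nat.zero_le b) h
  let y0 : (Module.End F (Laur F (N + 1)))ˣ :=
    ⟨Y 0, Yi 0, (hYinv 0 (by omega)).1, (hYinv 0 (by omega)).2⟩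
  let p : (Module.End F (Laur F (N + 1)))ˣ := (seg t 0 N)⁻¹ * y0
  have hp : piInv = p := by
    have h0 : Y 0 = ((seg t 0 N : (Module.End F (Laur F (N + 1)))ˣ) :
        Module.End F (Laur F (N + 1))) * piInv := by
      rw [hY 0, dU 0 N (Nat.zero_le N) le_rfl]
      simp [aF]
    rw [show (p : Module.End F (Laur F (N + 1))) = (((seg t 0 N)⁻¹ :
        (Module.End F (Laur F (N + 1)))ˣ) : Module.End F (Laur F (N + 1))) * Y 0 from rfl, h0,
      Units.inv_mul_cancel_left]
  have hY0 : Y 0 = ((seg t 0 N * p : (Module.End F (Laur F (N + 1)))ˣ) :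
      Module.End F (Laur F (N + 1))) := by
    simp only [p]; rw [mul_inv_cancel_left]
  have hYi0 : Yi 0 = (((seg t 0 N * p)⁻¹ : (Module.End F (Laur F (N + 1)))ˣ) :
      Module.End F (Laur F (N + 1))) :=
    inv_val _ _ (by rw [← hY0]; exact (hYinv 0 (by omega)).1)
  have hYN : Y N = ((p * seg (fun k => (t k)⁻¹) 0 N : (Module.End F (Laur F (N + 1)))ˣ) :
      Module.End F (Laur F (N + 1))) := by
    rw [hY N, dV0 N le_rfl, hp, Units.val_mul]
    simp [aF]
    rfl
  have hYiN : Yi N = (((p * seg (fun k => (t k)⁻¹) 0 N)⁻¹ :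
      (Module.End F (Laur F (N + 1)))ˣ) : Module.End F (Laur F (N + 1))) :=
    inv_val _ _ (by rw [← hYN]; exact (hYinv N (by omega)).1)
  let c : (Module.End F (Laur F (N + 1)))ˣ :=
    Units.map (algebraMap F (Module.End F (Laur F (N + 1)))).toMonoidHom (Units.mk0 q hq)
  have hc : (c : Module.End F (Laur F (N + 1))) = q • 1 := by
    change algebraMap F (Module.End F (Laur F (N + 1))) q = _
    rw [Algebra.algebraMap_eq_smul_one]
  have hδ : ∀ k, k < N → (((t k)⁻¹ : (Module.End F (Laur F (N + 1)))ˣ) :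
      Module.End F (Laur F (N + 1))) = (t k : Module.End F (Laur F (N + 1))) + (τ⁻¹ - τ) • 1 := by
    intro k hk
    rw [← hti k hk, ← ht k hk, hTi k]
  have H : GData _ N t x p c := by
    constructor
    · intro k hk
      have e : t k * x k = x (k + 1) * (t k)⁻¹ := by
        apply Units.ext
        rw [Units.val_mul, Units.val_mul, ← ht k hk, ← hti k hk, ← hx, ← hx]
        apply LinearMap.ext; intro f
        simp only [Module.End.mul_apply, XOp_apply (show k < N + 1 by omega),
          XOp_apply (show k + 1 < N + 1 by omega)]
        rw [(hact k (by omega)).2.lo, hTi k]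
        congr 1
        simp only [LinearMap.add_apply, LinearMap.smul_apply, Module.End.one_apply]
        module
      rw [e, inv_mul_cancel_right]
    · intro k m hk hm h1 h2
      apply Units.ext
      rw [Units.val_mul, Units.val_mul, ← ht k hk, ← hx]
      apply LinearMap.ext; intro f
      simp only [Module.End.mul_apply, XOp_apply (show m < N + 1 by omega)]
      exact (hact k (by omega)).2.ot _ (by simpa [Fin.ext_iff] using h1)
        (by simpa [Fin.ext_iff] using h2) f
    · intro k hk
      apply Units.ext
      simp only [Units.val_mul]
      rw [← ht k (by omega), ← ht (k + 1) hk]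
      exact tact_braid (hact k (by omega)).2 (hact (k + 1) (by omega)).2 (hact k (by omega)).1
        (hact (k + 1) (by omega)).1 (by simp [Fin.ext_iff]) (by simp [Fin.ext_iff])
        (by simp [Fin.ext_iff]; omega)
    · intro k m h1 h2
      apply Units.ext
      simp only [Units.val_mul]
      rw [← ht k (by omega), ← ht m h2]
      exact tact_far (hact k (by omega)).2 (hact m (by omega)).2 (hact k (by omega)).1
        (hact m (by omega)).1 (by simp [Fin.ext_iff]; omega) (by simp [Fin.ext_iff]; omega)
        (by simp [Fin.ext_iff]; omega) (by simp [Fin.ext_iff]; omega)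
    · intro k hk
      apply Units.ext
      simp only [Units.val_mul]
      rw [← ht k (by omega), ← ht (k + 1) hk, ← hp]
      exact tact_pi hq (hact k (by omega)).2 (hact (k + 1) (by omega)).2 (hact k (by omega)).1
        (hact (k + 1) (by omega)).1 hP1 (finRotate (N + 1)).symm 0 hPX (hrot _ _) (hrot _ _)
        (hz0 _ _) (hz0 _ _)
    · apply Units.ext
      simp only [Units.val_mul]
      rw [← hx, ← hx, ← hp, hc]
      apply LinearMap.ext; intro f
      simp only [Module.End.mul_apply, XOp_apply (show 0 < N + 1 by omega),
        XOp_apply (show N < N + 1 by omega), LinearMap.smul_apply, Module.End.one_apply]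
      have := hPX 0 f
      rw [if_pos rfl, hrot0] at this
      exact this
    · intro k hk
      apply Units.ext
      simp only [Units.val_mul]
      rw [← hx, ← hx, ← hp]
      apply LinearMap.ext; intro f
      simp only [Module.End.mul_apply, XOp_apply (show k < N + 1 by omega),
        XOp_apply (show k + 1 < N + 1 by omega)]
      rw [hPX, if_neg (hz0 _ _), hrot, one_smul]
    · intro k m
      apply Units.ext
      simp only [Units.val_mul]
      rw [← hx, ← hx]
      unfold XOp
      split_ifs <;> simp [mulOp, ← LinearMap.mulLeft_mul, Module.End.mul_eq_comp, mul_comm]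
    · intro g
      apply Units.ext
      simp only [Units.val_mul, hc]
      simp
  have hDD : ∀ i, i ≤ N → D i = (q - q⁻¹)⁻¹ • DD N t x p i := by
    intro i hi
    rw [hD i, dU i N hi le_rfl, dVi i N hi le_rfl, hYN, hYiN, xU'_inv, DD, mul_smul_comm,
      smul_mul_assoc]
  have hs : ∀ (r : F) (a b : Module.End F (Laur F (N + 1))), r • a - r • b = r • (a - b) :=
    fun r a b => (smul_sub r a b).symm
  refine ⟨fun l hl => ?_, fun l hl => ?_, fun i j hij hj => ?_, fun i j hij hj => ?_⟩
  · rw [hDD l (by omega), hx, mul_smul_comm, claim1 H (by omega), dV l N (by omega) le_rfl,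
      dVi l N (by omega) le_rfl, hYN, hYiN]
  · rw [hDD l (by omega), hx, smul_mul_assoc, claim2 H hq hc (by omega), dU0 l (by omega),
      dUi0 l (by omega), hY0, hYi0]
  · rw [hDD j (by omega), hx, smul_mul_assoc, mul_smul_comm, hs,
      claim3 H hδ hc hij (by omega), smul_smul, mul_comm (τ⁻¹ - τ), dV i N (by omega) le_rfl,
      dUi0 (j - 1) (by omega), dVi j N (by omega) le_rfl, dU0 i (by omega), hY0, hYiN]
  · rw [hDD i (by omega), hx, smul_mul_assoc, mul_smul_comm, hs,
      claim4 H hq hδ hc hij (by omega), smul_smul, mul_comm (τ⁻¹ - τ), dV j N (by omega) le_rfl,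
      dUi0 i (by omega), dVi i N (by omega) le_rfl, dU0 (j - 1) (by omega), hYi0, hYN]
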